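/- Let X be a complex Banach space whose algebraic dimension (as a ℂ-vector space) equals the cardinality of the continuum 𝔠 = 2^ℵ₀, and let T be a bounded linear operator on X. Then T is algebraically similar to the Volterra operator V acting on C[0,1] if and only if T is injective, quasinilpotent, and satisfies the closed finite descent condition: there exists m ∈ ℕ such that the closure of T^m(X) equals the closure of T^{m+1}(X). -/

import Mathlib

open MeasureTheory Set

/-- The Volterra operator on `C[0,1]` (complex-valued): `(V f)(x) = ∫_0^x f(t) dt`. -/
noncomputable def volterra : C(Set.Icc (0:ℝ) 1, ℂ) →ₗ[ℂ] C(Set.Icc (0:ℝ) 1, ℂ) where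
  toFun f :=
    ⟨fun x => ∫ t in (0:ℝ)..(x : ℝ), f (Set.projIcc 0 1 zero_le_one t),
      (intervalIntegral.continuous_primitive
        (fun a b => (f.continuous.comp continuous_projIcc).intervalIntegrable a b) 0).comp
        continuous_subtype_val⟩
  map_add' f g := by
    ext x
    simp only [ContinuousMap.coe_mk, ContinuousMap.add_apply]
    exact intervalIntegral.integral_add
      ((f.continuous.comp continuous_projIcc).intervalIntegrable _ _)
      ((g.continuous.comp continuous_projIcc).intervalIntegrable _ _)
  map_smul' c f := by
    ext x
    simp only [ContinuousMap.coe_mk, ContinuousMap.smul_apply, RingHom.id_apply]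
    exact intervalIntegral.integral_smul c _

/-- A linear operator on a complex vector space is quasinilpotent if its spectrum is
contained in `{0}`, i.e. `T - z • id` is bijective for every nonzero `z`. -/
def IsQuasinilpotentOp {X : Type*} [AddCommGroup X] [Module ℂ X] (T : X →ₗ[ℂ] X) : Prop :=
  ∀ z : ℂ, z ≠ 0 → Function.Bijective fun x => T x - z • x


open Polynomial

section DivisiblePart

variable (A : Type*) [AddCommGroup A] [Module ℂ[X] A]

/-- The submodule of a `ℂ[X]`-module formed by the elements divisible by every power of `X`. -/
def infinitelyDivisible : Submodule ℂ[X] A where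
  carrier := {x | ∀ n : ℕ, ∃ y : A, (X : ℂ[X]) ^ n • y = x}
  zero_mem' n := ⟨0, smul_zero _⟩
  add_mem' := by
    intro a b ha hb n
    obtain ⟨y, rfl⟩ := ha n
    obtain ⟨z, rfl⟩ := hb n
    exact ⟨y + z, smul_add _ _ _⟩
  smul_mem' := by
    intro p a ha n
    obtain ⟨y, rfl⟩ := ha n
    exact ⟨p • y, smul_comm _ _ _⟩

variable {A}

lemma mem_infinitelyDivisible {x : A} :
    x ∈ infinitelyDivisible A ↔ ∀ n : ℕ, ∃ y : A, (X : ℂ[X]) ^ n • y = x := Iff.rfl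

lemma bijective_X_smul_infinitelyDivisible
    (hX : Function.Injective fun a : A => (X : ℂ[X]) • a) :
    Function.Bijective fun d : infinitelyDivisible A => (X : ℂ[X]) • d := by
  refine ⟨fun a b h => Subtype.ext (hX (congrArg Subtype.val h)), fun d => ?_⟩
  obtain ⟨x, hx⟩ := d.2 1
  rw [pow_one] at hx
  refine ⟨⟨x, fun n => ?_⟩, Subtype.ext hx⟩
  obtain ⟨w, hw⟩ := d.2 (n + 1)
  refine ⟨w, hX ?_⟩
  simp only [hx, ← hw, ← mul_smul, pow_succ']

lemma bijective_X_sub_C_smul_infinitelyDivisible {z : ℂ}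
    (hz : Function.Bijective fun a : A => (X - C z : ℂ[X]) • a) :
    Function.Bijective fun d : infinitelyDivisible A => (X - C z : ℂ[X]) • d := by
  refine ⟨fun a b h => Subtype.ext (hz.1 (congrArg Subtype.val h)), fun d => ?_⟩
  obtain ⟨x, hx⟩ := hz.2 d
  refine ⟨⟨x, fun n => ?_⟩, Subtype.ext hx⟩
  obtain ⟨y, hy⟩ := d.2 n
  obtain ⟨w, hw⟩ := hz.2 y
  refine ⟨w, hz.1 ?_⟩
  simp only at hx hw ⊢
  rw [smul_comm, hw, hy, hx]

/-- If `X` acts injectively and `X - z` bijectively for `z ≠ 0`, then every nonzero polynomial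
acts bijectively on the infinitely divisible part. -/
lemma bijective_smul_infinitelyDivisible
    (hX : Function.Injective fun a : A => (X : ℂ[X]) • a)
    (hz : ∀ z : ℂ, z ≠ 0 → Function.Bijective fun a : A => (X - C z : ℂ[X]) • a)
    {p : ℂ[X]} (hp : p ≠ 0) :
    Function.Bijective fun d : infinitelyDivisible A => p • d := by
  have hprod : ∀ s : Multiset ℂ, Function.Bijective
      fun d : infinitelyDivisible A => (s.map fun z => X - C z).prod • d := by
    intro s
    induction s using Multiset.induction_on with
    | empty => simpa using! Function.bijective_id
    | cons z s ih =>
      have hlin : Function.Bijective fun d : infinitelyDivisible A => (X - C z : ℂ[X]) • d := by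
        by_cases h0 : z = 0
        · simpa [h0] using bijective_X_smul_infinitelyDivisible hX
        · exact bijective_X_sub_C_smul_infinitelyDivisible (hz z h0)
      simpa only [Multiset.map_cons, Multiset.prod_cons, mul_smul] using! hlin.comp ih
  have hunit : IsUnit (C p.leadingCoeff) :=
    isUnit_C.2 (IsUnit.mk0 _ (leadingCoeff_ne_zero.2 hp))
  have hfac := (IsAlgClosed.splits p).eq_prod_roots
  obtain ⟨u, hu⟩ := hunit
  rw [hfac, ← hu]
  simpa only [mul_smul] using! (MulAction.bijective u).comp (hprod p.roots)

lemma baer_infinitelyDivisible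
    (hX : Function.Injective fun a : A => (X : ℂ[X]) • a)
    (hz : ∀ z : ℂ, z ≠ 0 → Function.Bijective fun a : A => (X - C z : ℂ[X]) • a) :
    Module.Baer ℂ[X] (infinitelyDivisible A) := by
  intro I g
  obtain ⟨a, rfl⟩ := (IsPrincipalIdealRing.principal I).principal
  by_cases ha : a = 0
  · refine ⟨0, fun x hx => ?_⟩
    have hx0 : x = 0 := by simpa [ha] using hx
    subst hx0
    exact (g.map_zero).symm
  · have hmem : a ∈ Submodule.span ℂ[X] {a} := Submodule.mem_span_singleton_self a
    obtain ⟨d, hd⟩ := (bijective_smul_infinitelyDivisible hX hz ha).2 (g ⟨a, hmem⟩)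
    refine ⟨LinearMap.toSpanSingleton _ _ d, fun x hx => ?_⟩
    obtain ⟨b, rfl⟩ := Submodule.mem_span_singleton.1 hx
    simp only at hd
    rw [LinearMap.toSpanSingleton_apply, smul_assoc, hd, ← map_smul]
    rfl

lemma exists_retraction_infinitelyDivisible
    (hX : Function.Injective fun a : A => (X : ℂ[X]) • a)
    (hz : ∀ z : ℂ, z ≠ 0 → Function.Bijective fun a : A => (X - C z : ℂ[X]) • a) :
    ∃ ρ : A →ₗ[ℂ[X]] infinitelyDivisible A, ∀ d : infinitelyDivisible A, ρ d = d := by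
  obtain ⟨ρ, hρ⟩ := (baer_infinitelyDivisible hX hz).extension_property
    (infinitelyDivisible A).subtype (Submodule.injective_subtype _) LinearMap.id
  exact ⟨ρ, fun d => LinearMap.congr_fun hρ d⟩

lemma nonempty_equiv_finsupp_fractionRing (K : Type) [Field K] [Algebra ℂ[X] K]
    [IsFractionRing ℂ[X] K]
    (hX : Function.Injective fun a : A => (X : ℂ[X]) • a)
    (hz : ∀ z : ℂ, z ≠ 0 → Function.Bijective fun a : A => (X - C z : ℂ[X]) • a)
    (hrank : Module.rank ℂ[X] (infinitelyDivisible A) = Cardinal.continuum) :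
    Nonempty (infinitelyDivisible A ≃ₗ[ℂ[X]] (ℝ →₀ K)) := by
  set D := infinitelyDivisible A
  have hloc : IsLocalizedModule (nonZeroDivisors ℂ[X]) (LinearMap.id : D →ₗ[ℂ[X]] D) :=
    { map_units := fun p => (Module.End.isUnit_iff _).2
        (bijective_smul_infinitelyDivisible hX hz (nonZeroDivisors.coe_ne_zero p))
      surj := fun y => ⟨(y, 1), one_smul _ _⟩
      exists_of_eq := fun h => ⟨1, congrArg _ h⟩ }
  let : Module K D := IsLocalizedModule.module (nonZeroDivisors ℂ[X]) LinearMap.id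
  have : IsScalarTower ℂ[X] K D :=
    IsLocalizedModule.isScalarTower_module (nonZeroDivisors ℂ[X]) LinearMap.id
  obtain ⟨f⟩ := nonempty_linearEquiv_of_lift_rank_eq (R := K) (M := D) (M' := ℝ →₀ K) (by
    rw [IsLocalization.rank_eq (R := ℂ[X]) K (nonZeroDivisors ℂ[X]) le_rfl, hrank,
      rank_finsupp_self]
    simp [Cardinal.mk_real])
  exact ⟨f.restrictScalars ℂ[X]⟩

end DivisiblePart

section Structure

/-- The right shift on sequences. -/
def rightShift (E : Type*) [AddCommGroup E] [Module ℂ E] : (ℕ → E) →ₗ[ℂ] (ℕ → E) where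
  toFun f n := Nat.casesOn n 0 f
  map_add' f g := by
    funext n
    cases n <;> simp
  map_smul' c f := by
    funext n
    cases n <;> simp

@[simp]
lemma rightShift_zero {E : Type*} [AddCommGroup E] [Module ℂ E] (f : ℕ → E) :
    rightShift E f 0 = 0 := rfl

@[simp]
lemma rightShift_succ {E : Type*} [AddCommGroup E] [Module ℂ E] (f : ℕ → E) (n : ℕ) :
    rightShift E f (n + 1) = f n := rfl

variable {V : Type*} [AddCommGroup V] [Module ℂ V]

/-- Every formal series `∑ Tᵏ sₖ` is the asymptotic expansion of some vector. -/
def HasBorelProperty (T : V →ₗ[ℂ] V) : Prop :=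
  ∀ s : ℕ → V, ∃ x : V, ∀ n : ℕ, ∃ y : V, x = ∑ k ∈ Finset.range n, (T ^ k) (s k) + (T ^ n) y

variable {T : V →ₗ[ℂ] V}

lemma apply_pow_eq_zero_of_intertwines {E : Type*} [AddCommGroup E] [Module ℂ E]
    {π : V →ₗ[ℂ] (ℕ → E)} (hπ : ∀ x, π (T x) = rightShift E (π x)) (n : ℕ) (y : V) {j : ℕ}
    (hj : j < n) : π ((T ^ n) y) j = 0 := by
  induction n generalizing j with
  | zero => exact absurd hj (Nat.not_lt_zero j)
  | succ n ih =>
    rw [pow_succ', Module.End.mul_apply, hπ]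
    cases j with
    | zero => rfl
    | succ j => exact ih (Nat.lt_of_succ_lt_succ hj)

lemma apply_pow_add_of_intertwines {E : Type*} [AddCommGroup E] [Module ℂ E]
    {π : V →ₗ[ℂ] (ℕ → E)} (hπ : ∀ x, π (T x) = rightShift E (π x)) (n : ℕ) (y : V) (j : ℕ) :
    π ((T ^ n) y) (n + j) = π y j := by
  induction n with
  | zero => simp
  | succ n ih =>
    rw [pow_succ', Module.End.mul_apply, hπ, show n + 1 + j = (n + j) + 1 by omega,
      rightShift_succ, ih]

/-- For injective `T` with the Borel property, the coefficients of the asymptotic expansion along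
a complement of the range of `T` intertwine `T` with the right shift. -/
lemma exists_coefficient_map (hT : Function.Injective T) (hB : HasBorelProperty T) :
    ∃ π : V →ₗ[ℂ] (ℕ → V ⧸ LinearMap.range T), (∀ x, π (T x) = rightShift _ (π x)) ∧
      Function.Surjective π ∧ ∀ x, π x = 0 → ∀ n : ℕ, ∃ y, (T ^ n) y = x := by
  let q := (LinearMap.range T).mkQ
  obtain ⟨σ, hσ⟩ := q.exists_rightInverse_of_surjective (Submodule.range_mkQ _)
  have hqσ : ∀ e, q (σ e) = e := fun e => LinearMap.congr_fun hσ e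
  have hqT : ∀ x, q (T x) = 0 := fun x =>
    (Submodule.Quotient.mk_eq_zero _).2 (LinearMap.mem_range_self T x)
  let δ : V →ₗ[ℂ] LinearMap.range T := (LinearMap.id - σ ∘ₗ q).codRestrict _ fun x => by
    rw [← Submodule.Quotient.mk_eq_zero, ← Submodule.mkQ_apply]
    change q (x - σ (q x)) = 0
    rw [map_sub, hqσ, sub_self]
  let Λ : V →ₗ[ℂ] V := (LinearEquiv.ofInjective T hT).symm.toLinearMap ∘ₗ δ
  have hTΛ : ∀ x, T (Λ x) = x - σ (q x) := fun x =>
    congrArg Subtype.val ((LinearEquiv.ofInjective T hT).apply_symm_apply (δ x))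
  have hΛT : ∀ x, Λ (T x) = x := fun x => hT (by rw [hTΛ, hqT, map_zero, sub_zero])
  have hΛσ : ∀ e, Λ (σ e) = 0 := fun e => hT (by rw [hTΛ, hqσ, sub_self, map_zero])
  let π : V →ₗ[ℂ] (ℕ → V ⧸ LinearMap.range T) := LinearMap.pi fun n => q ∘ₗ Λ ^ n
  have hπ : ∀ x, π (T x) = rightShift _ (π x) := by
    intro x
    funext n
    cases n with
    | zero => exact hqT x
    | succ n =>
      change q ((Λ ^ (n + 1)) (T x)) = q ((Λ ^ n) x)
      rw [pow_succ, Module.End.mul_apply, hΛT]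
  have hπσ : ∀ e, π (σ e) 0 = e := hqσ
  have hπσ' : ∀ e n, π (σ e) (n + 1) = 0 := by
    intro e n
    change q ((Λ ^ (n + 1)) (σ e)) = 0
    rw [pow_succ, Module.End.mul_apply, hΛσ, map_zero, map_zero]
  refine ⟨π, hπ, fun e => ?_, fun x hx n => ?_⟩
  · obtain ⟨x, hx⟩ := hB fun k => σ (e k)
    refine ⟨x, funext fun j => ?_⟩
    obtain ⟨y, hy⟩ := hx (j + 1)
    rw [hy, map_add, map_sum, Pi.add_apply, Finset.sum_apply,
      apply_pow_eq_zero_of_intertwines hπ _ _ (Nat.lt_succ_self j), add_zero,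
      Finset.sum_eq_single_of_mem j (Finset.self_mem_range_succ j)]
    · simpa [hπσ] using apply_pow_add_of_intertwines hπ j (σ (e j)) 0
    · intro k hk hkj
      obtain ⟨i, rfl⟩ : ∃ i, j = k + (i + 1) :=
        ⟨j - k - 1, by have := Finset.mem_range.1 hk; omega⟩
      rw [apply_pow_add_of_intertwines hπ, hπσ']
  · refine ⟨(Λ ^ n) x, ?_⟩
    induction n with
    | zero => rfl
    | succ n ih =>
      have hn : q ((Λ ^ n) x) = 0 := congrFun hx n
      rw [pow_succ T, pow_succ' Λ, Module.End.mul_apply, Module.End.mul_apply, hTΛ, hn, map_zero,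
        sub_zero, ih]

open Module (AEval')

lemma mem_infinitelyDivisible_of {x : V} :
    AEval'.of T x ∈ infinitelyDivisible (AEval' T) ↔ ∀ n : ℕ, ∃ y, (T ^ n) y = x := by
  rw [mem_infinitelyDivisible]
  refine forall_congr' fun n => ⟨?_, ?_⟩
  · rintro ⟨y, hy⟩
    refine ⟨(AEval'.of T).symm y, ?_⟩
    rw [← (AEval'.of T).apply_symm_apply y, Module.AEval.X_pow_smul_of] at hy
    exact (AEval'.of T).injective hy
  · rintro ⟨y, rfl⟩
    exact ⟨AEval'.of T y, Module.AEval.X_pow_smul_of _ _ _⟩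

lemma injective_X_smul_aeval (hT : Function.Injective T) :
    Function.Injective fun a : AEval' T => (X : ℂ[X]) • a := by
  intro a b h
  simpa [Module.AEval.of_symm_X_smul, hT.eq_iff] using congrArg (AEval'.of T).symm h

lemma bijective_X_sub_C_smul_aeval (hT : IsQuasinilpotentOp T) {z : ℂ} (hz : z ≠ 0) :
    Function.Bijective fun a : AEval' T => (X - C z : ℂ[X]) • a := by
  have h := ((AEval'.of T).bijective.comp (hT z hz)).comp (AEval'.of T).symm.bijective
  convert! h using 1
  funext a
  apply (AEval'.of T).symm.injective
  simp [sub_smul]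

/-- Injective quasinilpotent operators with the Borel property, for which both relevant ranks are
the continuum, are all similar to one model operator. -/
theorem exists_equiv_model (hT : Function.Injective T) (hq : IsQuasinilpotentOp T)
    (hB : HasBorelProperty T)
    (hE : Module.rank ℂ (V ⧸ LinearMap.range T) = Cardinal.continuum)
    (hD : Module.rank ℂ[X] (infinitelyDivisible (AEval' T)) = Cardinal.continuum) :
    ∃ G : V ≃ₗ[ℂ] (ℝ →₀ FractionRing ℂ[X]) × (ℕ → ℝ →₀ ℂ),
      ∀ x, G (T x) = ((X : ℂ[X]) • (G x).1, rightShift _ (G x).2) := by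
  have hX := injective_X_smul_aeval hT
  have hz := fun z hz => bijective_X_sub_C_smul_aeval hq (z := z) hz
  obtain ⟨ρ, hρ⟩ := exists_retraction_infinitelyDivisible hX hz
  obtain ⟨d⟩ := nonempty_equiv_finsupp_fractionRing (FractionRing ℂ[X]) hX hz hD
  obtain ⟨π, hπ, hπs, hπk⟩ := exists_coefficient_map hT hB
  obtain ⟨ε⟩ := nonempty_linearEquiv_of_lift_rank_eq (R := ℂ) (M := V ⧸ LinearMap.range T)
    (M' := ℝ →₀ ℂ) (by rw [hE, rank_finsupp_self]; simp [Cardinal.mk_real])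
  let F : V →ₗ[ℂ] (ℝ →₀ FractionRing ℂ[X]) × (ℕ → ℝ →₀ ℂ) :=
    ((d.toLinearMap ∘ₗ ρ).restrictScalars ℂ ∘ₗ (AEval'.of T).toLinearMap).prod
      (LinearMap.pi fun n => ε.toLinearMap ∘ₗ LinearMap.proj n ∘ₗ π)
  have hF1 : ∀ x, (F x).1 = d (ρ (AEval'.of T x)) := fun x => rfl
  have hF2 : ∀ x n, (F x).2 n = ε (π x n) := fun x n => rfl
  have hinj : Function.Injective F := by
    rw [injective_iff_map_eq_zero]
    intro x hx
    have h2 : π x = 0 := funext fun n => ε.injective (by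
      rw [← hF2, hx, Pi.zero_apply, map_zero]; rfl)
    have h1 : ρ (AEval'.of T x) = 0 := d.injective (by rw [← hF1, hx, map_zero]; rfl)
    have hmem := mem_infinitelyDivisible_of.2 (hπk x h2)
    have h3 := hρ ⟨_, hmem⟩
    rw [h1] at h3
    exact (AEval'.of T).injective (congrArg Subtype.val h3.symm)
  have hπd : ∀ y : infinitelyDivisible (AEval' T), π ((AEval'.of T).symm y) = 0 := by
    intro y
    funext j
    have hy : AEval'.of T ((AEval'.of T).symm y) ∈ infinitelyDivisible (AEval' T) := by simp
    obtain ⟨w, hw⟩ := mem_infinitelyDivisible_of.1 hy (j + 1)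
    rw [← hw]
    exact apply_pow_eq_zero_of_intertwines hπ _ _ (Nat.lt_succ_self j)
  have hsurj : Function.Surjective F := by
    rintro ⟨a, b⟩
    obtain ⟨x, hx⟩ := hπs fun n => ε.symm (b n)
    let y : infinitelyDivisible (AEval' T) := d.symm a - ρ (AEval'.of T x)
    refine ⟨x + (AEval'.of T).symm y, Prod.ext ?_ (funext fun n => ?_)⟩
    · rw [hF1, map_add, LinearEquiv.apply_symm_apply, map_add, hρ]
      simp [y]
    · rw [hF2, map_add, hπd, add_zero, hx, LinearEquiv.apply_symm_apply]
  refine ⟨LinearEquiv.ofBijective F ⟨hinj, hsurj⟩, fun x => ?_⟩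
  refine Prod.ext ?_ (funext fun n => ?_)
  · change d (ρ (AEval'.of T (T x))) = (X : ℂ[X]) • d (ρ (AEval'.of T x))
    rw [← map_smul, ← map_smul, Module.AEval'.X_smul_of]
  · change ε (π (T x) n) = rightShift _ (F x).2 n
    rw [hπ]
    cases n with
    | zero => exact map_zero ε
    | succ n => rfl

end Structure

section ClosedDescent

variable {X : Type*} [NormedAddCommGroup X] [NormedSpace ℂ X] {T : X →ₗ[ℂ] X}

lemma continuous_pow_apply (hT : Continuous T) (n : ℕ) : Continuous (T ^ n : X →ₗ[ℂ] X) := by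
  rw [Module.End.coe_pow]
  exact hT.iterate n

lemma exists_preimage_of_closure_range_eq (hT : Continuous T) {m : ℕ}
    (hm : closure ((LinearMap.range (T ^ m) : Submodule ℂ X) : Set X) =
      closure ((LinearMap.range (T ^ (m + 1)) : Submodule ℂ X) : Set X))
    (w : X) (n : ℕ) {ε : ℝ} (hε : 0 < ε) :
    ∃ w' : X, ∀ j ≤ n, ‖(T ^ (m + j)) (T w' - w)‖ ≤ ε := by
  let g : X → ℝ := fun z => ∑ j ∈ Finset.range (n + 1), ‖(T ^ j) (z - (T ^ m) w)‖
  have hg : Continuous g := continuous_finsetSum _ fun j _ =>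
    ((continuous_pow_apply hT j).comp (continuous_id.sub continuous_const)).norm
  have hmem : (T ^ m) w ∈ closure ((LinearMap.range (T ^ (m + 1)) : Submodule ℂ X) : Set X) :=
    hm ▸ subset_closure (LinearMap.mem_range_self _ w)
  have hnhds : {z | g z < ε} ∈ nhds ((T ^ m) w) :=
    (isOpen_lt hg continuous_const).mem_nhds (by simpa [g] using hε)
  obtain ⟨z, hz, w', rfl⟩ := mem_closure_iff_nhds.1 hmem _ hnhds
  refine ⟨w', fun j hj => ?_⟩
  have hle := Finset.single_le_sum
    (f := fun j => ‖(T ^ j) ((T ^ (m + 1)) w' - (T ^ m) w)‖) (fun i _ => norm_nonneg _)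
    (Finset.mem_range.2 (Nat.lt_succ_of_le hj))
  have heq : (T ^ j) ((T ^ (m + 1)) w' - (T ^ m) w) = (T ^ (m + j)) (T w' - w) := by
    simp only [add_comm m j, pow_add T j m, pow_succ T m, Module.End.mul_apply, map_sub]
  rw [← heq]
  exact hle.trans hz.le

/-- The Mittag-Leffler argument: under closed finite descent, the vectors divisible by all powers
of `T` are dense in the range of `T ^ m`. -/
lemma exists_divisible_near_of_closure_range_eq [CompleteSpace X] (hT : Continuous T) {m : ℕ}
    (hm : closure ((LinearMap.range (T ^ m) : Submodule ℂ X) : Set X) =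
      closure ((LinearMap.range (T ^ (m + 1)) : Submodule ℂ X) : Set X))
    (x : X) {ε : ℝ} (hε : 0 < ε) :
    ∃ v : X, (∀ n : ℕ, ∃ y, (T ^ n) y = v) ∧ ‖(T ^ m) x - v‖ ≤ ε := by
  choose f hf using fun (w : X) (n : ℕ) =>
    exists_preimage_of_closure_range_eq hT hm w n (ε := ε / 2 / 2 ^ n) (by positivity)
  let w : ℕ → X := fun n => Nat.rec x (fun n v => f v n) n
  have hw : ∀ n, ∀ j ≤ n, ‖(T ^ (m + j)) (T (w (n + 1)) - w n)‖ ≤ ε / 2 / 2 ^ n :=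
    fun n => hf (w n) n
  let u : ℕ → ℕ → X := fun k n => (T ^ (m + n)) (w (k + n))
  have hu : ∀ k n, dist (u k n) (u k (n + 1)) ≤ ε / 2 / 2 ^ n := by
    intro k n
    have h1 := hw (k + n) n (Nat.le_add_left n k)
    rw [dist_comm, dist_eq_norm]
    have h2 : u k (n + 1) - u k n = (T ^ (m + n)) (T (w (k + n + 1)) - w (k + n)) := by
      simp only [u, map_sub]
      rw [← add_assoc m n 1, pow_succ, Module.End.mul_apply, add_assoc]
    rw [h2]
    refine h1.trans (div_le_div_of_nonneg_left (by positivity) (by positivity) ?_)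
    exact pow_le_pow_right₀ one_le_two (Nat.le_add_left n k)
  choose z hz using fun k => cauchySeq_tendsto_of_complete (cauchySeq_of_le_geometric_two (hu k))
  have hTz : ∀ k, T (z (k + 1)) = z k := by
    intro k
    refine tendsto_nhds_unique ((hT.tendsto _).comp (hz (k + 1)))
      (((hz k).comp (Filter.tendsto_add_atTop_nat 1)).congr fun n => ?_)
    simp only [Function.comp_apply, u]
    rw [← add_assoc m n 1, pow_succ', Module.End.mul_apply, add_right_comm k 1 n, add_assoc]
  have hTn : ∀ n, (T ^ n) (z n) = z 0 := by
    intro n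
    induction n with
    | zero => rfl
    | succ n ih => rw [pow_succ, Module.End.mul_apply, hTz, ih]
  refine ⟨z 0, fun n => ⟨z n, hTn n⟩, ?_⟩
  have h0 := dist_le_of_le_geometric_two_of_tendsto₀ (hu 0) (hz 0)
  rwa [dist_eq_norm] at h0

lemma hasBorelProperty_of_closure_range_eq [CompleteSpace X] (hT : Continuous T)
    (hinj : Function.Injective T) {m : ℕ}
    (hm : closure ((LinearMap.range (T ^ m) : Submodule ℂ X) : Set X) =
      closure ((LinearMap.range (T ^ (m + 1)) : Submodule ℂ X) : Set X)) :
    HasBorelProperty T := by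
  intro s
  have happrox : ∀ k : ℕ, ∃ v : X, (∀ n : ℕ, ∃ y, (T ^ n) y = v) ∧
      ∀ j ≤ k, ‖(T ^ (m + j)) (s k - v)‖ ≤ (1 / 2) ^ k := by
    intro k
    let g : X → ℝ := fun z => ∑ j ∈ Finset.range (k + 1), ‖(T ^ j) ((T ^ m) (s k) - z)‖
    have hg : Continuous g := continuous_finsetSum _ fun j _ =>
      ((continuous_pow_apply hT j).comp (continuous_const.sub continuous_id)).norm
    have hnhds : {z | g z < (1 / 2) ^ k} ∈ nhds ((T ^ m) (s k)) :=
      (isOpen_lt hg continuous_const).mem_nhds (by simp [g])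
    obtain ⟨δ, hδ, hball⟩ := Metric.nhds_basis_closedBall.mem_iff.1 hnhds
    obtain ⟨v', hv', hclose⟩ := exists_divisible_near_of_closure_range_eq hT hm (s k) hδ
    obtain ⟨v, rfl⟩ := hv' m
    have hinjm : Function.Injective (T ^ m : X →ₗ[ℂ] X) := by
      rw [Module.End.coe_pow]
      exact hinj.iterate m
    refine ⟨v, fun n => ?_, fun j hj => ?_⟩
    · obtain ⟨y, hy⟩ := hv' (m + n)
      rw [pow_add, Module.End.mul_apply] at hy
      exact ⟨y, hinjm hy⟩
    · have hz : g ((T ^ m) v) < (1 / 2) ^ k :=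
        hball (by rwa [Metric.mem_closedBall, dist_comm, dist_eq_norm])
      have hle := Finset.single_le_sum
        (f := fun j => ‖(T ^ j) ((T ^ m) (s k) - (T ^ m) v)‖) (fun i _ => norm_nonneg _)
        (Finset.mem_range.2 (Nat.lt_succ_of_le hj))
      have heq : (T ^ j) ((T ^ m) (s k) - (T ^ m) v) = (T ^ (m + j)) (s k - v) := by
        rw [add_comm m j, pow_add, Module.End.mul_apply, ← map_sub]
      rw [← heq]
      exact hle.trans hz.le
  choose v hv hsmall using happrox
  let r : ℕ → X := fun k => s k - v k
  have hsum : ∀ n, Summable fun i => (T ^ i) (r (i + n)) := by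
    intro n
    refine (summable_nat_add_iff m).1 (Summable.of_norm_bounded
      (g := fun i : ℕ => (1 / 2 : ℝ) ^ i) summable_geometric_two fun i => ?_)
    have h1 := hsmall (i + m + n) i (by omega)
    rw [add_comm i m] at h1 ⊢
    exact h1.trans (pow_le_pow_of_le_one (by norm_num) (by norm_num) (by omega))
  refine ⟨∑' i, (T ^ i) (r i), fun n => ?_⟩
  choose w hw using fun k => hv k n
  have hsum0 : Summable fun i => (T ^ i) (r i) := by simpa using hsum 0
  refine ⟨∑' i, (T ^ i) (r (i + n)) - ∑ k ∈ Finset.range n, (T ^ k) (w k), ?_⟩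
  have hshift : (T ^ n) (∑' i, (T ^ i) (r (i + n))) = ∑' i, (T ^ (i + n)) (r (i + n)) := by
    have hc := (hsum n).map_tsum (T ^ n) (continuous_pow_apply hT n)
    simpa only [← Module.End.mul_apply, ← pow_add, add_comm n] using hc
  have hcomm : (T ^ n) (∑ k ∈ Finset.range n, (T ^ k) (w k)) =
      ∑ k ∈ Finset.range n, (T ^ k) (v k) := by
    rw [map_sum]
    refine Finset.sum_congr rfl fun k _ => ?_
    rw [← hw k, ← Module.End.mul_apply, ← Module.End.mul_apply, ← pow_add, ← pow_add, add_comm]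
  rw [← hsum0.sum_add_tsum_nat_add n, map_sub, hshift, hcomm]
  simp only [r, map_sub, Finset.sum_sub_distrib]
  abel

lemma exists_closure_range_eq_of_hasBorelProperty (hB : HasBorelProperty T) :
    ∃ m : ℕ, closure ((LinearMap.range (T ^ m) : Submodule ℂ X) : Set X) =
      closure ((LinearMap.range (T ^ (m + 1)) : Submodule ℂ X) : Set X) := by
  by_contra! hne
  have hstep : ∀ (n : ℕ) (P : X), ∃ s : X, ∀ y : X,
      (n : ℝ) ≤ ‖P + (T ^ n) s + (T ^ (n + 1)) y‖ := by
    intro n P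
    set Y : Set X := ((LinearMap.range (T ^ (n + 1)) : Submodule ℂ X) : Set X)
    have hle : Y ⊆ ((LinearMap.range (T ^ n) : Submodule ℂ X) : Set X) := by
      rintro _ ⟨y, rfl⟩
      exact ⟨T y, by rw [pow_succ, Module.End.mul_apply]⟩
    obtain ⟨u, hu⟩ : ∃ u, (T ^ n) u ∉ closure Y := by
      by_contra! hall
      refine hne n (Set.Subset.antisymm (closure_minimal ?_ isClosed_closure)
        (closure_mono hle))
      rintro _ ⟨u, rfl⟩
      exact hall u
    have hd : 0 < Metric.infDist ((T ^ n) u) Y :=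
      Metric.infDist_nonneg.lt_of_ne fun h =>
        hu ((Metric.mem_closure_iff_infDist_zero ⟨0, Submodule.zero_mem _⟩).2 h.symm)
    set d := Metric.infDist ((T ^ n) u) Y
    have hc : 0 < (n + 1 + ‖P‖) / d := by positivity
    set c : ℝ := (n + 1 + ‖P‖) / d with hcdef
    refine ⟨(c : ℂ) • u, fun y => ?_⟩
    have hcC : (c : ℂ) ≠ 0 := by exact_mod_cast hc.ne'
    have hdist : d ≤ dist ((T ^ n) u) ((T ^ (n + 1)) (-((c : ℂ)⁻¹ • y))) :=
      Metric.infDist_le_dist_of_mem (LinearMap.mem_range_self _ _)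
    have hscale : (T ^ n) ((c : ℂ) • u) + (T ^ (n + 1)) y =
        (c : ℂ) • ((T ^ n) u - (T ^ (n + 1)) (-((c : ℂ)⁻¹ • y))) := by
      simp only [map_neg, map_smul, sub_neg_eq_add, smul_add]
      rw [smul_smul, mul_inv_cancel₀ hcC, one_smul]
    have hnorm : n + 1 + ‖P‖ ≤ ‖(T ^ n) ((c : ℂ) • u) + (T ^ (n + 1)) y‖ := by
      rw [hscale, norm_smul, Complex.norm_real, Real.norm_of_nonneg hc.le, ← dist_eq_norm]
      calc n + 1 + ‖P‖ = c * d := by rw [hcdef, div_mul_cancel₀ _ hd.ne']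
        _ ≤ _ := mul_le_mul_of_nonneg_left hdist hc.le
    have htri := norm_sub_le (P + ((T ^ n) ((c : ℂ) • u) + (T ^ (n + 1)) y)) P
    rw [add_sub_cancel_left] at htri
    rw [add_assoc]
    linarith
  choose s hs using hstep
  let P : ℕ → X := fun n => Nat.rec 0 (fun n p => p + (T ^ n) (s n p)) n
  have hP : ∀ n, P n = ∑ k ∈ Finset.range n, (T ^ k) (s k (P k)) := by
    intro n
    induction n with
    | zero => rfl
    | succ n ih =>
      rw [Finset.sum_range_succ, ← ih]
  obtain ⟨x, hx⟩ := hB fun k => s k (P k)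
  obtain ⟨n, hn⟩ := exists_nat_gt ‖x‖
  obtain ⟨y, hy⟩ := hx (n + 1)
  have hge := hs n (P n) y
  rw [Finset.sum_range_succ, ← hP] at hy
  rw [← hy] at hge
  linarith

end ClosedDescent

section Quasinilpotent

variable {X : Type*} [NormedAddCommGroup X] [NormedSpace ℂ X] [CompleteSpace X] {T : X →L[ℂ] X}

lemma spectralRadius_eq_zero_of_isQuasinilpotentOp
    (hq : IsQuasinilpotentOp (T : X →ₗ[ℂ] X)) : spectralRadius ℂ T = 0 := by
  refine le_antisymm (iSup₂_le fun z hz => ?_) bot_le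
  by_contra hne
  have hz0 : z ≠ 0 := fun h => hne (by simp [h])
  refine spectrum.mem_iff.1 hz ?_
  rw [← neg_sub, IsUnit.neg_iff, ContinuousLinearMap.isUnit_iff_bijective]
  convert! hq z hz0 using 1

lemma eventually_norm_pow_le_of_isQuasinilpotentOp
    (hq : IsQuasinilpotentOp (T : X →ₗ[ℂ] X)) {ε : ℝ} (hε : 0 < ε) :
    ∀ᶠ n : ℕ in Filter.atTop, ‖T ^ n‖ ≤ ε ^ n := by
  have h := spectrum.pow_norm_pow_one_div_tendsto_nhds_spectralRadius T
  rw [spectralRadius_eq_zero_of_isQuasinilpotentOp hq] at h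
  have hlt : (0 : ENNReal) < ENNReal.ofReal ε := by simpa using hε
  filter_upwards [h.eventually_lt_const hlt, Filter.eventually_gt_atTop 0] with n hn hn0
  have h1 : ‖T ^ n‖ ^ (1 / n : ℝ) ≤ ε := ((ENNReal.ofReal_lt_ofReal_iff hε).1 hn).le
  calc ‖T ^ n‖ = (‖T ^ n‖ ^ (1 / n : ℝ)) ^ n := by
        rw [one_div, Real.rpow_inv_natCast_pow (norm_nonneg _) hn0.ne']
    _ ≤ ε ^ n := pow_le_pow_left₀ (Real.rpow_nonneg (norm_nonneg _) _) h1 n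

lemma exists_norm_apply_lt_of_isQuasinilpotentOp [Nontrivial X]
    (hq : IsQuasinilpotentOp (T : X →ₗ[ℂ] X)) {c : ℝ} (hc : 0 < c) :
    ∃ x, ‖T x‖ < c * ‖x‖ := by
  by_contra! hle
  obtain ⟨x, hx⟩ := exists_ne (0 : X)
  have hpow : ∀ n : ℕ, c ^ n * ‖x‖ ≤ ‖(T ^ n) x‖ := by
    intro n
    induction n with
    | zero => simp
    | succ n ih =>
      rw [pow_succ' T, mul_apply_eq_comp, pow_succ', mul_assoc]
      exact (mul_le_mul_of_nonneg_left ih hc.le).trans (hle _)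
  obtain ⟨n, hn, hn0⟩ := ((eventually_norm_pow_le_of_isQuasinilpotentOp hq (half_pos hc)).and
    (Filter.eventually_gt_atTop 0)).exists
  have h1 : c ^ n * ‖x‖ ≤ (c / 2) ^ n * ‖x‖ := (hpow n).trans
    (((T ^ n).le_opNorm x).trans (mul_le_mul_of_nonneg_right hn (norm_nonneg _)))
  have h2 : c ^ n ≤ (c / 2) ^ n := le_of_mul_le_mul_right h1 (norm_pos_iff.2 hx)
  exact absurd h2 (not_le.2 (pow_lt_pow_left₀ (half_lt_self hc) (half_pos hc).le hn0.ne'))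

/-- If every vector of the range is approximately hit with control of the preimage, then an
injective operator is bounded below. -/
lemma le_norm_apply_of_approximate_preimages (hT : Function.Injective T) {C : ℝ} (hC : 0 ≤ C)
    (h : ∀ u, ∃ u', ‖u'‖ ≤ C * ‖T u‖ ∧ ‖T u - T u'‖ ≤ ‖T u‖ / 2) (x : X) :
    ‖x‖ ≤ 2 * C * ‖T x‖ := by
  choose f hf hf' using h
  let r : ℕ → X := fun n => Nat.rec x (fun _ v => v - f v) n
  have hr : ∀ n, r (n + 1) = r n - f (r n) := fun n => rfl
  have hTr : ∀ n, ‖T (r n)‖ ≤ ‖T x‖ / 2 ^ n := by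
    intro n
    induction n with
    | zero => simp [r]
    | succ n ih =>
      rw [hr, map_sub, pow_succ, ← div_div]
      exact (hf' _).trans (by linarith)
  have hbound : ∀ n, ‖f (r n)‖ ≤ 2 * C * ‖T x‖ / 2 / 2 ^ n := by
    intro n
    refine (hf (r n)).trans ((mul_le_mul_of_nonneg_left (hTr n) hC).trans (le_of_eq ?_))
    ring
  have hsum : HasSum (fun n => 2 * C * ‖T x‖ / 2 / 2 ^ n) (2 * C * ‖T x‖) :=
    hasSum_geometric_two' _
  have hfs : Summable fun n => f (r n) := Summable.of_norm_bounded hsum.summable hbound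
  have hpart : ∀ n, ∑ k ∈ Finset.range n, f (r k) = x - r n := by
    intro n
    induction n with
    | zero => simp [r]
    | succ n ih => rw [Finset.sum_range_succ, ih, hr]; abel
  have hTr0 : Filter.Tendsto (fun n => T (r n)) Filter.atTop (nhds 0) := by
    refine squeeze_zero_norm hTr ?_
    simpa [div_eq_mul_inv] using
      (tendsto_pow_atTop_nhds_zero_of_lt_one (r := (2 : ℝ)⁻¹) (by norm_num)
        (by norm_num)).const_mul ‖T x‖
  have hlim : T (∑' n, f (r n)) = T x := by
    refine tendsto_nhds_unique ((T.continuous.tendsto _).comp hfs.hasSum.tendsto_sum_nat) ?_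
    simpa [Function.comp_def, hpart] using hTr0.const_sub (T x)
  calc ‖x‖ = ‖∑' n, f (r n)‖ := by rw [hT hlim]
    _ ≤ _ := tsum_of_norm_bounded hsum hbound

lemma exists_apply_far_of_isQuasinilpotentOp [Nontrivial X] (hT : Function.Injective T)
    (hq : IsQuasinilpotentOp (T : X →ₗ[ℂ] X)) {δ N : ℝ} (hδ : 0 < δ) (hN : 0 ≤ N) :
    ∃ u, ‖T u‖ = δ ∧ ∀ u', ‖u'‖ ≤ N → δ / 2 < ‖T u - T u'‖ := by
  have hex : ∃ u, ∀ u', ‖u'‖ ≤ N / δ * ‖T u‖ → ‖T u‖ / 2 < ‖T u - T u'‖ := by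
    by_contra! hall
    obtain ⟨x, hx⟩ := exists_norm_apply_lt_of_isQuasinilpotentOp hq
      (c := (2 * (N / δ) + 1)⁻¹) (by positivity)
    have hle := le_norm_apply_of_approximate_preimages hT (by positivity) hall x
    have hpos : 0 < 2 * (N / δ) + 1 := by positivity
    rw [inv_mul_eq_div, lt_div_iff₀ hpos] at hx
    nlinarith [norm_nonneg (T x)]
  obtain ⟨u, hu⟩ := hex
  have hTu : 0 < ‖T u‖ := by
    refine (norm_nonneg _).lt_of_ne fun h => ?_
    have := hu 0 (by simp [← h])
    simp [← h] at this
  let c : ℝ := δ / ‖T u‖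
  have hc : 0 < c := div_pos hδ hTu
  have hcC : (c : ℂ) ≠ 0 := by exact_mod_cast hc.ne'
  have hcn : ‖(c : ℂ)‖ = c := by rw [Complex.norm_real, Real.norm_of_nonneg hc.le]
  refine ⟨(c : ℂ) • u, ?_, fun u' hu' => ?_⟩
  · rw [map_smul, norm_smul, hcn, div_mul_cancel₀ _ hTu.ne']
  · have h1 := hu ((c : ℂ)⁻¹ • u') (by
      rw [norm_smul, norm_inv, hcn, inv_div, div_mul_eq_mul_div, div_mul_eq_mul_div, mul_comm]
      gcongr)
    have h2 : T ((c : ℂ) • u) - T u' = (c : ℂ) • (T u - T ((c : ℂ)⁻¹ • u')) := by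
      rw [map_smul, map_smul, smul_sub, smul_smul, mul_inv_cancel₀ hcC, one_smul]
    rw [h2, norm_smul, hcn]
    calc δ / 2 = c * (‖T u‖ / 2) := by
          rw [← mul_div_assoc, div_mul_cancel₀ _ hTu.ne']
      _ < _ := mul_lt_mul_of_pos_left h1 hc

end Quasinilpotent

section AlmostDisjoint

/-- An almost disjoint family of infinite subsets of `ℕ`, indexed by `ℝ` and enumerated. -/
noncomputable def branch (x : ℝ) (m : ℕ) : ℕ := Nat.pair m (Encodable.encode ⌊(m : ℝ) * x⌋)

lemma le_branch (x : ℝ) (m : ℕ) : m ≤ branch x m := Nat.left_le_pair _ _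

lemma tendsto_branch (x : ℝ) : Filter.Tendsto (branch x) Filter.atTop Filter.atTop :=
  Filter.tendsto_atTop_mono (le_branch x) Filter.tendsto_id

lemma eventually_branch_notMem_range {x y : ℝ} (hxy : x ≠ y) :
    ∀ᶠ m in Filter.atTop, branch x m ∉ Set.range (branch y) := by
  obtain ⟨M, hM⟩ := exists_nat_gt (1 / |x - y|)
  filter_upwards [Filter.eventually_ge_atTop M] with m hm
  rintro ⟨m', h⟩
  obtain ⟨rfl, h2⟩ := Nat.pair_eq_pair.1 h
  have h3 := Int.abs_sub_lt_one_of_floor_eq_floor (Encodable.encode_injective h2)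
  have hpos : 0 < |x - y| := abs_pos.2 (sub_ne_zero.2 hxy)
  rw [div_lt_iff₀ hpos] at hM
  rw [← mul_sub, abs_mul, Nat.abs_cast, abs_sub_comm] at h3
  have h4 : (M : ℝ) * |x - y| ≤ m' * |x - y| :=
    mul_le_mul_of_nonneg_right (by exact_mod_cast hm) hpos.le
  linarith

lemma eventually_branch_notMem_range_finset (s : Finset ℝ) (x : ℝ) :
    ∀ᶠ m in Filter.atTop, ∀ y ∈ s, y ≠ x → branch x m ∉ Set.range (branch y) := by
  rw [Filter.eventually_all_finset]
  intro y _
  by_cases h : y = x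
  · simp [h]
  · filter_upwards [eventually_branch_notMem_range (Ne.symm h)] with m hm _ using hm

end AlmostDisjoint

section RangeCodimension

open scoped Nat

variable {X : Type*} [NormedAddCommGroup X] [NormedSpace ℂ X] [CompleteSpace X] {T : X →L[ℂ] X}

/-- A gliding hump sequence: a bounded combination of the `y k` lies in the range of `T` only if
its coefficients tend to zero. -/
lemma exists_gliding_hump [Nontrivial X] (hT : Function.Injective T)
    (hq : IsQuasinilpotentOp (T : X →ₗ[ℂ] X)) :
    ∃ y : ℕ → X, (∀ k, ‖y k‖ = (k ! : ℝ)⁻¹) ∧ ∀ (a : ℕ → ℂ) (C : ℝ), (∀ k, ‖a k‖ ≤ C) →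
      ∀ u, T u = ∑' k, a k • y k → Filter.Tendsto a Filter.atTop (nhds 0) := by
  choose! U hU hfar using fun (j : ℕ) (S : ℝ) (hS : 0 ≤ S) =>
    exists_apply_far_of_isQuasinilpotentOp hT hq (δ := (j ! : ℝ)⁻¹) (N := j * (1 + S))
      (by positivity) (by positivity)
  let S : ℕ → ℝ := fun n => Nat.rec 0 (fun j t => t + ‖U j t‖) n
  let u : ℕ → X := fun j => U j (S j)
  have hS : ∀ n, S n = ∑ k ∈ Finset.range n, ‖u k‖ := by
    intro n
    induction n with
    | zero => rfl
    | succ n ih => rw [Finset.sum_range_succ, ← ih]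
  have hS0 : ∀ n, 0 ≤ S n := fun n => hS n ▸ Finset.sum_nonneg fun _ _ => norm_nonneg _
  have hnorm : ∀ k, ‖T (u k)‖ = (k ! : ℝ)⁻¹ := fun k => hU k (S k) (hS0 k)
  refine ⟨fun k => T (u k), hnorm, fun a C ha v hv => ?_⟩
  have hC : 0 ≤ C := (norm_nonneg _).trans (ha 0)
  have hterm : ∀ k, ‖a k • T (u k)‖ ≤ C * (k ! : ℝ)⁻¹ := fun k => by
    rw [norm_smul, hnorm]
    exact mul_le_mul_of_nonneg_right (ha k) (by positivity)
  have hsum : Summable fun k => a k • T (u k) := by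
    refine Summable.of_norm_bounded (Summable.mul_left C ?_) hterm
    simpa using Real.summable_pow_div_factorial 1
  by_contra hnot
  rw [Metric.tendsto_atTop] at hnot
  push Not at hnot
  obtain ⟨α, hα, hfreq⟩ := hnot
  obtain ⟨M, hM⟩ := exists_nat_gt ((‖v‖ + C + 2 * C) / α)
  obtain ⟨j, hj, haj⟩ := hfreq (M + 1)
  rw [dist_zero_right] at haj
  have hjR : (M : ℝ) + 1 ≤ j := by exact_mod_cast hj
  rw [div_lt_iff₀ hα] at hM
  have hMα : (M : ℝ) * α ≤ j * α := mul_le_mul_of_nonneg_right (by linarith) hα.le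
  have hjpos : (0 : ℝ) < j := by linarith [(Nat.cast_nonneg M : (0 : ℝ) ≤ M)]
  have hbpos : 0 < ‖a j‖ := hα.trans_le haj
  have hb0 : a j ≠ 0 := norm_pos_iff.1 hbpos
  let w : X := (a j)⁻¹ • (v - ∑ k ∈ Finset.range j, a k • u k)
  have hw : ‖w‖ ≤ j * (1 + S j) := by
    have h1 : ‖v - ∑ k ∈ Finset.range j, a k • u k‖ ≤ ‖v‖ + C * S j := by
      refine (norm_sub_le _ _).trans (add_le_add_right ?_ _)
      rw [hS, Finset.mul_sum]
      refine norm_sum_le_of_le _ fun k _ => ?_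
      rw [norm_smul]
      exact mul_le_mul_of_nonneg_right (ha k) (norm_nonneg _)
    rw [norm_smul, norm_inv, inv_mul_le_iff₀ hbpos]
    calc _ ≤ ‖v‖ + C * S j := h1
      _ ≤ (‖v‖ + C + 2 * C) * (1 + S j) := by
        nlinarith [hS0 j, norm_nonneg v, mul_nonneg (norm_nonneg v) (hS0 j),
          mul_nonneg hC (hS0 j)]
      _ ≤ (j * α) * (1 + S j) := mul_le_mul_of_nonneg_right (by linarith) (by linarith [hS0 j])
      _ ≤ (j * ‖a j‖) * (1 + S j) := by have := hS0 j; gcongr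
      _ = _ := by ring
  have hdiff : T (u j) - T w = -(a j)⁻¹ • ∑' i, a (i + (j + 1)) • T (u (i + (j + 1))) := by
    have h1 := hsum.sum_add_tsum_nat_add (j + 1)
    rw [← hv, Finset.sum_range_succ] at h1
    have h2 : T w = (a j)⁻¹ • (T v - ∑ k ∈ Finset.range j, a k • T (u k)) := by
      simp only [w, map_smul, map_sub, map_sum]
    rw [h2, ← h1, add_assoc, add_sub_cancel_left, smul_add, smul_smul, inv_mul_cancel₀ hb0,
      one_smul, neg_smul]
    abel
  have htail : ‖∑' i, a (i + (j + 1)) • T (u (i + (j + 1)))‖ ≤ C * ((j ! : ℝ)⁻¹ * (j : ℝ)⁻¹) := by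
    set r : ℝ := ((j : ℝ) + 1)⁻¹ with hr
    have hr1 : r < 1 := inv_lt_one_of_one_lt₀ (by linarith)
    have hgeom := (hasSum_geometric_of_lt_one (r := r) (by positivity) hr1).mul_left
      (C * ((j ! : ℝ)⁻¹ * r))
    have hval : C * ((j ! : ℝ)⁻¹ * r) * (1 - r)⁻¹ = C * ((j ! : ℝ)⁻¹ * (j : ℝ)⁻¹) := by
      have : 1 - r = j * r := by rw [hr]; field_simp; ring
      rw [this, mul_inv, mul_assoc, mul_assoc]
      have hr0 : r ≠ 0 := by positivity
      field_simp
    rw [hval] at hgeom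
    refine tsum_of_norm_bounded hgeom fun i => (hterm _).trans ?_
    rw [mul_assoc, mul_assoc, ← pow_succ', hr, inv_pow, ← mul_inv]
    refine mul_le_mul_of_nonneg_left (inv_anti₀ (by positivity) ?_) hC
    have := Nat.factorial_mul_pow_le_factorial (m := j) (n := i + 1)
    rw [show i + (j + 1) = j + (i + 1) by omega]
    exact_mod_cast this
  have hlt := hfar j (S j) (hS0 j) w hw
  change (j ! : ℝ)⁻¹ / 2 < ‖T (u j) - T w‖ at hlt
  rw [hdiff, norm_smul, norm_neg, norm_inv] at hlt
  have hfin : ‖a j‖⁻¹ * (C * ((j ! : ℝ)⁻¹ * (j : ℝ)⁻¹)) ≤ (j ! : ℝ)⁻¹ / 2 := by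
    have h2 : 2 * C ≤ ‖a j‖ * j := by
      have : j * α ≤ j * ‖a j‖ := mul_le_mul_of_nonneg_left haj hjpos.le
      nlinarith [norm_nonneg v]
    have h3 : ‖a j‖⁻¹ * (C * ((j ! : ℝ)⁻¹ * (j : ℝ)⁻¹)) =
        (j ! : ℝ)⁻¹ * (C / (‖a j‖ * j)) := by
      field_simp
    rw [h3, div_eq_mul_inv _ (2 : ℝ)]
    refine mul_le_mul_of_nonneg_left ?_ (by positivity)
    rw [div_le_iff₀ (by positivity)]
    linarith
  have := mul_le_mul_of_nonneg_left htail (inv_nonneg.2 hbpos.le)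
  linarith

/-- The range of an injective quasinilpotent operator has codimension at least the continuum. -/
lemma continuum_le_rank_quotient_range [Nontrivial X] (hT : Function.Injective T)
    (hq : IsQuasinilpotentOp (T : X →ₗ[ℂ] X)) :
    Cardinal.continuum ≤ Module.rank ℂ (X ⧸ LinearMap.range (T : X →ₗ[ℂ] X)) := by
  obtain ⟨y, hy, hyT⟩ := exists_gliding_hump hT hq
  let χ : ℝ → ℕ → ℂ := fun x => Set.indicator (Set.range (branch x)) 1
  have hχ : ∀ x k, ‖χ x k‖ ≤ 1 := fun x k => by
    by_cases h : k ∈ Set.range (branch x) <;> simp [χ, h]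
  have hsum : ∀ x, Summable fun k => χ x k • y k := by
    intro x
    refine Summable.of_norm_bounded (g := fun k : ℕ => (k ! : ℝ)⁻¹)
      (by simpa using Real.summable_pow_div_factorial 1) fun k => ?_
    rw [norm_smul, hy]
    exact mul_le_of_le_one_left (by positivity) (hχ x k)
  have hli : LinearIndependent ℂ fun x : ℝ =>
      (LinearMap.range (T : X →ₗ[ℂ] X)).mkQ (∑' k, χ x k • y k) := by
    rw [linearIndependent_iff']
    intro s g hg i hi
    simp only [← map_smul, ← map_sum] at hg
    obtain ⟨u, hu⟩ := (Submodule.Quotient.mk_eq_zero _).1 hg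
    have hcomb : T u = ∑' k, (∑ x ∈ s, g x * χ x k) • y k := by
      refine hu.trans ?_
      simp only [Finset.sum_smul, mul_smul]
      rw [Summable.tsum_finsetSum fun x _ => (hsum x).const_smul (g x)]
      exact Finset.sum_congr rfl fun x _ => ((hsum x).tsum_const_smul (g x)).symm
    have hlim := hyT _ (∑ x ∈ s, ‖g x‖) (fun k => norm_sum_le_of_le _ fun x _ => by
      rw [norm_mul]
      exact mul_le_of_le_one_right (norm_nonneg _) (hχ x k)) u hcomb
    refine tendsto_nhds_unique (Filter.Tendsto.congr' ?_ tendsto_const_nhds)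
      (hlim.comp (tendsto_branch i))
    filter_upwards [eventually_branch_notMem_range_finset s i] with m hm
    rw [Function.comp_apply, Finset.sum_eq_single_of_mem i hi fun x hx hxi => by
      simp [χ, Set.indicator_of_notMem (hm x hx hxi)]]
    simp [χ]
  simpa [Cardinal.mk_real] using hli.cardinal_lift_le_rank

end RangeCodimension

section BoundedSeries

lemma coeff_polynomial_smul (p : ℂ[X]) (f : PowerSeries ℂ) (n : ℕ) :
    PowerSeries.coeff n (p • f) =
      ∑ i ∈ Finset.range (n + 1), p.coeff i * PowerSeries.coeff (n - i) f := by
  rw [Algebra.smul_def, PowerSeries.algebraMap_apply', Algebra.algebraMap_self,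
    PowerSeries.map_id, id_eq, PowerSeries.coeff_mul,
    Finset.Nat.sum_antidiagonal_eq_sum_range_succ
      (fun i j => PowerSeries.coeff i (p : PowerSeries ℂ) * PowerSeries.coeff j f)]
  simp only [Polynomial.coeff_coe]

lemma coeff_succ_X_smul (f : PowerSeries ℂ) (n : ℕ) :
    PowerSeries.coeff n f = PowerSeries.coeff (n + 1) ((X : ℂ[X]) • f) := by
  rw [coeff_polynomial_smul, Finset.sum_eq_single_of_mem 1 (by simp)
    fun i _ hi => by rw [coeff_X, if_neg hi.symm, zero_mul]]
  simp

/-- The power series with bounded coefficients. -/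
def boundedSeries : Submodule ℂ[X] (PowerSeries ℂ) where
  carrier := {f | ∃ C : ℝ, ∀ n, ‖PowerSeries.coeff n f‖ ≤ C}
  zero_mem' := ⟨0, by simp⟩
  add_mem' := by
    rintro f g ⟨C, hC⟩ ⟨D, hD⟩
    exact ⟨C + D, fun n => by simpa using norm_add_le_of_le (hC n) (hD n)⟩
  smul_mem' := by
    rintro p f ⟨C, hC⟩
    refine ⟨(∑' i, ‖p.coeff i‖) * C, fun n => ?_⟩
    have hC0 : 0 ≤ C := (norm_nonneg _).trans (hC 0)
    rw [coeff_polynomial_smul]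
    calc ‖∑ i ∈ Finset.range (n + 1), p.coeff i * PowerSeries.coeff (n - i) f‖
        ≤ ∑ i ∈ Finset.range (n + 1), ‖p.coeff i‖ * C := by
          refine norm_sum_le_of_le _ fun i _ => ?_
          rw [norm_mul]
          gcongr
          exact hC _
      _ = (∑ i ∈ Finset.range (n + 1), ‖p.coeff i‖) * C := by rw [Finset.sum_mul]
      _ ≤ (∑' i, ‖p.coeff i‖) * C := by
          refine mul_le_mul_of_nonneg_right ?_ hC0
          exact Summable.sum_le_tsum _ (fun _ _ => norm_nonneg _)
            (summable_of_ne_finset_zero (s := p.support) fun i hi => by simpa using hi)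

/-- The lacunary series whose exponents are the powers of two along a branch. -/
noncomputable def lacunarySeries (x : ℝ) : PowerSeries ℂ :=
  PowerSeries.mk (Set.indicator (Set.range fun m => 2 ^ branch x m) 1)

lemma lacunarySeries_mem (x : ℝ) : lacunarySeries x ∈ boundedSeries := by
  refine ⟨1, fun n => ?_⟩
  by_cases h : n ∈ Set.range fun m => 2 ^ branch x m
  · simp only [lacunarySeries, PowerSeries.coeff_mk, Set.indicator_of_mem h, Pi.one_apply, norm_one,
      le_refl]
  · simp only [lacunarySeries, PowerSeries.coeff_mk, Set.indicator_of_notMem h, norm_zero,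
      zero_le_one]

lemma linearIndependent_lacunarySeries : LinearIndependent ℂ[X] lacunarySeries := by
  rw [linearIndependent_iff']
  intro s g hsum i hi
  by_contra hgi
  set D := s.sup fun j => (g j).natDegree
  have hD : ∀ j ∈ s, (g j).natDegree ≤ D := fun j hj =>
    Finset.le_sup (f := fun j => (g j).natDegree) hj
  obtain ⟨m, hm, hDm⟩ := ((eventually_branch_notMem_range_finset s i).and
    ((tendsto_branch i).eventually_ge_atTop (2 * D + 2))).exists
  set M := branch i m with hM
  have hbig : 2 * D < 2 ^ M := lt_of_lt_of_le (by omega) Nat.lt_two_pow_self.le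
  have hpow : ∀ a k : ℕ, a ≤ D → a + 2 ^ k = 2 ^ M + (g i).natDegree → k = M := by
    intro a k ha h
    have hdi := hD i hi
    rcases lt_trichotomy k M with hk | hk | hk
    · have := Nat.pow_le_pow_right (n := 2) (by norm_num) (Nat.succ_le_of_lt hk)
      rw [Nat.succ_eq_add_one, pow_succ] at this
      omega
    · exact hk
    · have := Nat.pow_le_pow_right (n := 2) (by norm_num) (Nat.succ_le_of_lt hk)
      rw [Nat.succ_eq_add_one, pow_succ] at this
      omega
  have hterm : ∀ j ∈ s, ∀ a ≤ 2 ^ M + (g i).natDegree, (j ≠ i ∨ a ≠ (g i).natDegree) →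
      (g j).coeff a * PowerSeries.coeff (2 ^ M + (g i).natDegree - a) (lacunarySeries j) = 0 := by
    intro j hj a ha hne
    by_cases haD : a ≤ D
    · rw [lacunarySeries, PowerSeries.coeff_mk, Set.indicator_of_notMem, mul_zero]
      rintro ⟨k, hk⟩
      have hkM := hpow a (branch j k) haD (by simp only at hk; omega)
      simp only [hkM] at hk
      rcases hne with hne | hne
      · exact hm j hj hne ⟨k, hkM⟩
      · omega
    · rw [Polynomial.coeff_eq_zero_of_natDegree_lt ((hD j hj).trans_lt (not_le.1 haD)), zero_mul]
  have hc := congrArg (PowerSeries.coeff (2 ^ M + (g i).natDegree)) hsum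
  simp only [map_sum, coeff_polynomial_smul, map_zero] at hc
  rw [Finset.sum_eq_single_of_mem i hi fun j hj hji => Finset.sum_eq_zero fun a ha =>
      hterm j hj a (by simpa [Nat.lt_succ_iff] using ha) (Or.inl hji),
    Finset.sum_eq_single_of_mem (g i).natDegree (by simp) fun a ha hne =>
      hterm i hi a (by simpa [Nat.lt_succ_iff] using ha) (Or.inr hne),
    Nat.add_sub_cancel, lacunarySeries, PowerSeries.coeff_mk,
    Set.indicator_of_mem (Set.mem_range_self m), Pi.one_apply, mul_one] at hc
  exact hgi (Polynomial.leadingCoeff_eq_zero.1 hc)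

lemma continuum_le_rank_boundedSeries :
    Cardinal.continuum ≤ Module.rank ℂ[X] boundedSeries := by
  have h : LinearIndependent ℂ[X] fun x => (⟨lacunarySeries x, lacunarySeries_mem x⟩ :
      boundedSeries) :=
    LinearIndependent.of_comp boundedSeries.subtype linearIndependent_lacunarySeries
  simpa [Cardinal.mk_real] using h.cardinal_lift_le_rank

end BoundedSeries

section PowerSeriesCalculus

open Module

variable {E : Type*} [NormedAddCommGroup E] [NormedSpace ℂ E]

lemma aeval_toLinearMap_apply (T : E →L[ℂ] E) (p : ℂ[X]) (x : E) :
    aeval T p x = aeval (T : E →ₗ[ℂ] E) p x := by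
  simp [aeval_eq_sum_range, LinearMap.sum_apply, Module.End.coe_pow]

/-- The operator `f(T)` for a power series `f`. -/
noncomputable def powerSeriesCalculus (T : E →L[ℂ] E) (f : PowerSeries ℂ) : E →L[ℂ] E :=
  ∑' n, PowerSeries.coeff n f • T ^ n

lemma commute_powerSeriesCalculus (T : E →L[ℂ] E) (f : PowerSeries ℂ) :
    Commute T (powerSeriesCalculus T f) :=
  Commute.tsum_right _ fun n => ((Commute.refl T).pow_right n).smul_right _

variable [CompleteSpace E] {T : E →L[ℂ] E}

lemma summable_smul_pow_of_isQuasinilpotentOp (hq : IsQuasinilpotentOp (T : E →ₗ[ℂ] E))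
    {f : PowerSeries ℂ} (hf : f ∈ boundedSeries) :
    Summable fun n => PowerSeries.coeff n f • T ^ n := by
  obtain ⟨C, hC⟩ := hf
  have hC0 : 0 ≤ C := (norm_nonneg _).trans (hC 0)
  refine Summable.of_norm_bounded_eventually_nat
    ((summable_geometric_of_lt_one (r := 1 / 2) (by norm_num) (by norm_num)).mul_left C) ?_
  filter_upwards [eventually_norm_pow_le_of_isQuasinilpotentOp hq (ε := 1 / 2) (by norm_num)]
    with n hn
  rw [norm_smul]
  exact mul_le_mul (hC n) hn (norm_nonneg _) hC0

lemma powerSeriesCalculus_add (hq : IsQuasinilpotentOp (T : E →ₗ[ℂ] E)) {f g : PowerSeries ℂ}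
    (hf : f ∈ boundedSeries) (hg : g ∈ boundedSeries) :
    powerSeriesCalculus T (f + g) = powerSeriesCalculus T f + powerSeriesCalculus T g := by
  simp only [powerSeriesCalculus, map_add, add_smul]
  exact (summable_smul_pow_of_isQuasinilpotentOp hq hf).tsum_add
    (summable_smul_pow_of_isQuasinilpotentOp hq hg)

lemma powerSeriesCalculus_eq_add (hq : IsQuasinilpotentOp (T : E →ₗ[ℂ] E)) {f g : PowerSeries ℂ}
    (hf : f ∈ boundedSeries)
    (hg : ∀ n, PowerSeries.coeff n g = PowerSeries.coeff (n + 1) f) :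
    powerSeriesCalculus T f =
      PowerSeries.coeff 0 f • (1 : E →L[ℂ] E) + T * powerSeriesCalculus T g := by
  have hgb : g ∈ boundedSeries := hf.imp fun C hC n => hg n ▸ hC (n + 1)
  rw [powerSeriesCalculus, (summable_smul_pow_of_isQuasinilpotentOp hq hf).tsum_eq_zero_add,
    pow_zero, powerSeriesCalculus, ← (summable_smul_pow_of_isQuasinilpotentOp hq hgb).tsum_mul_left]
  simp only [hg, pow_succ', mul_smul_comm]

lemma powerSeriesCalculus_smul (hq : IsQuasinilpotentOp (T : E →ₗ[ℂ] E)) (p : ℂ[X])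
    {f : PowerSeries ℂ} (hf : f ∈ boundedSeries) :
    powerSeriesCalculus T (p • f) = aeval T p * powerSeriesCalculus T f := by
  induction p using Polynomial.induction_on' with
  | add p q hp hq' =>
    rw [add_smul, powerSeriesCalculus_add hq (boundedSeries.smul_mem p hf)
      (boundedSeries.smul_mem q hf), hp, hq', map_add, add_mul]
  | monomial n a =>
    induction n with
    | zero =>
      have hcoeff : ∀ n, PowerSeries.coeff n ((monomial 0 a : ℂ[X]) • f) =
          a * PowerSeries.coeff n f := fun n => by
        rw [coeff_polynomial_smul, Finset.sum_eq_single_of_mem 0 (by simp)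
          fun i _ hi => by rw [coeff_monomial, if_neg hi.symm, zero_mul]]
        simp
      simp only [powerSeriesCalculus, hcoeff, mul_smul, aeval_monomial, pow_zero, mul_one,
        Algebra.algebraMap_eq_smul_one, smul_mul_assoc, one_mul]
      exact (summable_smul_pow_of_isQuasinilpotentOp hq hf).tsum_const_smul a
    | succ n ih =>
      rw [← X_mul_monomial, mul_smul, powerSeriesCalculus_eq_add hq (boundedSeries.smul_mem _
        (boundedSeries.smul_mem _ hf)) (g := (monomial n a : ℂ[X]) • f) (coeff_succ_X_smul _), ih,
        coeff_polynomial_smul]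
      simp [mul_assoc, pow_succ', Algebra.left_comm]

/-- `c + T Q` is injective when `c ≠ 0`, `T` is quasinilpotent and `Q` commutes with `T`. -/
lemma eq_zero_of_smul_add_apply_eq_zero (hq : IsQuasinilpotentOp (T : E →ₗ[ℂ] E))
    {Q : E →L[ℂ] E} (hQ : Commute T Q) {c : ℂ} (hc : c ≠ 0) {v : E}
    (hv : (c • (1 : E →L[ℂ] E) + T * Q) v = 0) : v = 0 := by
  set R : E →L[ℂ] E := (-c⁻¹) • Q with hR
  have hTR : Commute T R := hQ.smul_right _
  have hfix : (T * R) v = v := by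
    have h : T (Q v) = -(c • v) := by
      rw [eq_neg_iff_add_eq_zero, add_comm]
      simpa using hv
    simp [hR, h, hc]
  have hfixn : ∀ n : ℕ, (T ^ n) ((R ^ n) v) = v := by
    intro n
    rw [← mul_apply_eq_comp, ← hTR.mul_pow]
    induction n with
    | zero => simp
    | succ n ih => rw [pow_succ, mul_apply_eq_comp, hfix, ih]
  have hlim : Filter.Tendsto (fun n : ℕ => (1 / 2 : ℝ) ^ n * ‖v‖) Filter.atTop (nhds 0) := by
    simpa using (tendsto_pow_atTop_nhds_zero_of_lt_one (r := (1 / 2 : ℝ)) (by norm_num)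
      (by norm_num)).mul_const ‖v‖
  refine norm_le_zero_iff.1 (ge_of_tendsto hlim ?_)
  have hε : 0 < 1 / 2 / (‖R‖ + 1) := by positivity
  filter_upwards [eventually_norm_pow_le_of_isQuasinilpotentOp hq hε,
    Filter.eventually_gt_atTop 0] with n hn hn0
  calc ‖v‖ = ‖(T ^ n) ((R ^ n) v)‖ := by rw [hfixn]
    _ ≤ ‖T ^ n‖ * (‖R ^ n‖ * ‖v‖) := (ContinuousLinearMap.le_opNorm _ _).trans (by
        gcongr
        exact ContinuousLinearMap.le_opNorm _ _)
    _ ≤ (1 / 2 / (‖R‖ + 1)) ^ n * ((‖R‖ + 1) ^ n * ‖v‖) := by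
        gcongr
        exact (norm_pow_le' R hn0).trans (by gcongr; linarith)
    _ = (1 / 2 : ℝ) ^ n * ‖v‖ := by
        rw [← mul_assoc, ← mul_pow, div_mul_cancel₀ _ (by positivity)]

lemma eq_zero_of_powerSeriesCalculus_apply_eq_zero (hT : Function.Injective T)
    (hq : IsQuasinilpotentOp (T : E →ₗ[ℂ] E)) {v : E} (hv : v ≠ 0) {f : PowerSeries ℂ}
    (hf : f ∈ boundedSeries) (h : powerSeriesCalculus T f v = 0) : f = 0 := by
  have hzero : ∀ {f : PowerSeries ℂ}, f ∈ boundedSeries → powerSeriesCalculus T f v = 0 →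
      PowerSeries.coeff 0 f = 0 := by
    intro f hf h
    by_contra hc
    rw [powerSeriesCalculus_eq_add hq hf
      (g := PowerSeries.mk fun n => PowerSeries.coeff (n + 1) f) (by simp)] at h
    exact hv (eq_zero_of_smul_add_apply_eq_zero hq (commute_powerSeriesCalculus T _) hc h)
  ext n
  rw [map_zero]
  induction n generalizing f with
  | zero => exact hzero hf h
  | succ n ih =>
    have hg : (PowerSeries.mk fun n => PowerSeries.coeff (n + 1) f) ∈ boundedSeries :=
      hf.imp fun C hC n => by simpa using hC (n + 1)
    have h0 := hzero hf h
    rw [powerSeriesCalculus_eq_add hq hf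
      (g := PowerSeries.mk fun n => PowerSeries.coeff (n + 1) f) (by simp), h0, zero_smul,
      zero_add, mul_apply_eq_comp, map_eq_zero_iff T hT] at h
    simpa using ih hg h

/-- The infinitely divisible part of an injective quasinilpotent operator is zero or huge. -/
lemma continuum_le_rank_infinitelyDivisible (hT : Function.Injective T)
    (hq : IsQuasinilpotentOp (T : E →ₗ[ℂ] E)) {v : E} (hv : v ≠ 0)
    (hdiv : ∀ n : ℕ, ∃ y, ((T : E →ₗ[ℂ] E) ^ n) y = v) :
    Cardinal.continuum ≤
      Module.rank ℂ[X] (infinitelyDivisible (AEval' (T : E →ₗ[ℂ] E))) := by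
  have hmem : ∀ f : boundedSeries, AEval'.of (T : E →ₗ[ℂ] E) (powerSeriesCalculus T f v) ∈
      infinitelyDivisible (AEval' (T : E →ₗ[ℂ] E)) := by
    intro f
    rw [mem_infinitelyDivisible_of]
    intro n
    obtain ⟨y, rfl⟩ := hdiv n
    refine ⟨powerSeriesCalculus T f y, ?_⟩
    have h := ((commute_powerSeriesCalculus T f).pow_left n)
    simpa [Module.End.coe_pow] using congrArg (fun S : E →L[ℂ] E => S y) h.eq
  let Φ : boundedSeries →ₗ[ℂ[X]] infinitelyDivisible (AEval' (T : E →ₗ[ℂ] E)) :=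
    { toFun := fun f => ⟨_, hmem f⟩
      map_add' := fun f g => Subtype.ext (by
        simp [powerSeriesCalculus_add hq f.2 g.2])
      map_smul' := fun p f => Subtype.ext (by
        simp [powerSeriesCalculus_smul hq p f.2, ← AEval.of_aeval_smul,
          aeval_toLinearMap_apply]) }
  have hΦ : Function.Injective Φ := by
    rw [injective_iff_map_eq_zero]
    intro f hf
    refine Subtype.ext (eq_zero_of_powerSeriesCalculus_apply_eq_zero hT hq hv f.2 ?_)
    simpa [Φ] using hf
  have h := LinearMap.lift_rank_le_of_injective Φ hΦ
  have h' := (Cardinal.lift_le.2 continuum_le_rank_boundedSeries).trans h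
  simpa using h'

end PowerSeriesCalculus

section Model

open Module (AEval')
open Cardinal

theorem exists_equiv_model_of_closure_range_eq {E : Type*} [NormedAddCommGroup E]
    [NormedSpace ℂ E] [CompleteSpace E] [Nontrivial E] (hcard : #E ≤ 𝔠) {T : E →ₗ[ℂ] E}
    (hT : Continuous T) (hinj : Function.Injective T) (hq : IsQuasinilpotentOp T) {m : ℕ}
    (hm : closure ((LinearMap.range (T ^ m) : Submodule ℂ E) : Set E) =
      closure ((LinearMap.range (T ^ (m + 1)) : Submodule ℂ E) : Set E)) :
    ∃ G : E ≃ₗ[ℂ] (ℝ →₀ FractionRing ℂ[X]) × (ℕ → ℝ →₀ ℂ),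
      ∀ x, G (T x) = ((X : ℂ[X]) • (G x).1, rightShift _ (G x).2) := by
  let S : E →L[ℂ] E := ⟨T, hT⟩
  obtain ⟨x, hx⟩ := exists_ne (0 : E)
  have hTx : (T ^ m) x ≠ 0 := by
    rw [Module.End.coe_pow]
    exact fun h => hx (hinj.iterate m (h.trans (iterate_map_zero T m).symm))
  obtain ⟨v, hdiv, hv⟩ := exists_divisible_near_of_closure_range_eq hT hm x
    (half_pos (norm_pos_iff.2 hTx))
  have hv0 : v ≠ 0 := by
    rintro rfl
    rw [sub_zero] at hv
    linarith [norm_pos_iff.2 hTx]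
  refine exists_equiv_model hinj hq (hasBorelProperty_of_closure_range_eq hT hinj hm)
    (le_antisymm ?_ (continuum_le_rank_quotient_range (T := S) hinj hq))
    (le_antisymm ?_ (continuum_le_rank_infinitelyDivisible (T := S) hinj hq hv0 hdiv))
  · exact ((rank_le_card ℂ _).trans (mk_le_of_surjective (Submodule.mkQ_surjective _))).trans hcard
  · exact ((rank_le_card ℂ[X] _).trans (mk_le_of_injective (f := Subtype.val)
      Subtype.val_injective : _ ≤ #(AEval' T))).trans
      ((mk_congr (AEval'.of T).symm.toEquiv).trans_le hcard)

lemma mk_le_continuum_of_rank_le {E : Type*} [AddCommGroup E] [Module ℂ E] [Nontrivial E]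
    (h : Module.rank ℂ E ≤ 𝔠) : #E ≤ 𝔠 := by
  let b := Module.Free.chooseBasis ℂ E
  have := b.index_nonempty
  have hmk := mk_congr_lift b.repr.toEquiv
  rw [mk_finsupp_lift_of_infinite', mk_complex, ← Module.Free.rank_eq_card_chooseBasisIndex] at hmk
  simp only [lift_id, lift_uzero, lift_continuum, max_eq_right h] at hmk
  simpa using hmk.le

/-- Algebraic similarity preserves the Borel property. -/
lemma HasBorelProperty.of_equiv {V W : Type*} [AddCommGroup V] [Module ℂ V] [AddCommGroup W]
    [Module ℂ W] {T : V →ₗ[ℂ] V} {S : W →ₗ[ℂ] W} (hS : HasBorelProperty S) (G : V ≃ₗ[ℂ] W)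
    (hG : ∀ x, G (T x) = S (G x)) : HasBorelProperty T := by
  have hpow : ∀ (n : ℕ) x, G ((T ^ n) x) = (S ^ n) (G x) := fun n x => by
    simpa [Module.End.coe_pow] using (Function.Semiconj.iterate_right (f := G) hG n) x
  intro s
  obtain ⟨x, hx⟩ := hS fun k => G (s k)
  refine ⟨G.symm x, fun n => ?_⟩
  obtain ⟨y, hy⟩ := hx n
  refine ⟨G.symm y, G.injective ?_⟩
  simpa [hpow] using hy

lemma IsQuasinilpotentOp.of_equiv {V W : Type*} [AddCommGroup V] [Module ℂ V] [AddCommGroup W]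
    [Module ℂ W] {T : V →ₗ[ℂ] V} {S : W →ₗ[ℂ] W} (hS : IsQuasinilpotentOp S) (G : V ≃ₗ[ℂ] W)
    (hG : ∀ x, G (T x) = S (G x)) : IsQuasinilpotentOp T := by
  intro z hz
  have h := (G.symm.bijective.comp (hS z hz)).comp G.bijective
  convert! h using 1
  funext x
  simp [← hG]

end Model

section Volterra

open scoped Nat
open Cardinal (mk_le_of_injective)

lemma volterra_apply (f : C(Set.Icc (0 : ℝ) 1, ℂ)) (x : Set.Icc (0 : ℝ) 1) :
    volterra f x = ∫ t in (0 : ℝ)..x, f (Set.projIcc 0 1 zero_le_one t) := rfl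

lemma volterra_injective : Function.Injective volterra := by
  rw [injective_iff_map_eq_zero]
  intro f hf
  have hcont : Continuous fun t => f (Set.projIcc 0 1 zero_le_one t) :=
    f.continuous.comp continuous_projIcc
  have hIoo : ∀ x ∈ Set.Ioo (0 : ℝ) 1, f (Set.projIcc 0 1 zero_le_one x) = 0 := by
    intro x hx
    have hd := intervalIntegral.integral_hasDerivAt_right (hcont.intervalIntegrable 0 x)
      hcont.stronglyMeasurable.stronglyMeasurableAtFilter hcont.continuousAt
    refine hd.unique ((hasDerivAt_const x (0 : ℂ)).congr_of_eventuallyEq ?_)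
    filter_upwards [Ioo_mem_nhds hx.1 hx.2] with u hu
    exact congrArg (fun g : C(Set.Icc (0 : ℝ) 1, ℂ) => g ⟨u, hu.1.le, hu.2.le⟩) hf
  have hclos : ∀ x ∈ closure (Set.Ioo (0 : ℝ) 1), f (Set.projIcc 0 1 zero_le_one x) = 0 :=
    fun x hx => (isClosed_eq hcont continuous_const).closure_subset_iff.2 hIoo hx
  rw [closure_Ioo zero_ne_one] at hclos
  ext x
  simpa using hclos x x.2

lemma norm_volterra_pow_apply_le (f : C(Set.Icc (0 : ℝ) 1, ℂ)) (n : ℕ) (x : Set.Icc (0 : ℝ) 1) :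
    ‖(volterra ^ n) f x‖ ≤ ‖f‖ * (x : ℝ) ^ n / n ! := by
  induction n generalizing x with
  | zero => simpa using f.norm_coe_le_norm x
  | succ n ih =>
    rw [pow_succ', Module.End.mul_apply, volterra_apply]
    have hx := x.2
    have hprim : ∫ t in (0 : ℝ)..x, ‖f‖ * t ^ n / n ! = ‖f‖ * (x : ℝ) ^ (n + 1) / (n + 1)! := by
      simp only [mul_div_assoc, intervalIntegral.integral_const_mul,
        intervalIntegral.integral_div, integral_pow]
      rw [Nat.factorial_succ]
      push_cast
      field_simp
      simp
    rw [← hprim]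
    refine intervalIntegral.norm_integral_le_of_norm_le hx.1 (ae_of_all _ fun t ht => ?_)
      (Continuous.intervalIntegrable (by fun_prop) _ _)
    have ht' : t ∈ Set.Icc (0 : ℝ) 1 := ⟨ht.1.le, ht.2.trans hx.2⟩
    rw [Set.projIcc_of_mem zero_le_one ht']
    exact ih ⟨t, ht'⟩

lemma norm_volterra_pow_le (f : C(Set.Icc (0 : ℝ) 1, ℂ)) (n : ℕ) :
    ‖(volterra ^ n) f‖ ≤ (n ! : ℝ)⁻¹ * ‖f‖ := by
  rw [ContinuousMap.norm_le _ (by positivity)]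
  intro x
  refine (norm_volterra_pow_apply_le f n x).trans ?_
  rw [mul_div_assoc, mul_comm, ← one_div]
  gcongr
  exact pow_le_one₀ x.2.1 x.2.2

lemma continuous_volterra : Continuous volterra :=
  AddMonoidHomClass.continuous_of_bound volterra 1 fun f => by simpa using norm_volterra_pow_le f 1

lemma isQuasinilpotentOp_of_norm_pow_apply_le {E : Type*} [NormedAddCommGroup E] [NormedSpace ℂ E]
    [CompleteSpace E] {T : E →ₗ[ℂ] E}
    (h : ∀ (n : ℕ) (x : E), ‖(T ^ n) x‖ ≤ (n ! : ℝ)⁻¹ * ‖x‖) : IsQuasinilpotentOp T := by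
  intro z hz
  let S : E →L[ℂ] E := T.mkContinuous 1 fun x => by simpa using h 1 x
  have hS : ∀ n : ℕ, ‖S ^ n‖ ≤ (n ! : ℝ)⁻¹ := fun n =>
    ContinuousLinearMap.opNorm_le_bound _ (by positivity) fun x => by
      have hn := h n x
      rw [Module.End.coe_pow] at hn
      rwa [FunLike.coe_pow_eq_iterate]
  have hspec : z ∉ spectrum ℂ S := by
    intro hmem
    have hle : ∀ n : ℕ, 1 ≤ ‖z⁻¹‖ ^ n / n ! := by
      intro n
      have hn := calc
        ‖z ^ n‖ ≤ ‖S ^ n‖ * ‖(1 : E →L[ℂ] E)‖ :=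
          spectrum.norm_le_norm_mul_of_mem (spectrum.pow_mem_pow S n hmem)
        _ ≤ (n ! : ℝ)⁻¹ * 1 := by
          gcongr
          · exact hS n
          · exact ContinuousLinearMap.norm_id_le
      have hz' : 0 < ‖z‖ ^ n := pow_pos (norm_pos_iff.2 hz) n
      rw [norm_inv, inv_pow, div_eq_mul_inv, le_inv_mul_iff₀ hz', mul_one]
      simpa using hn
    exact absurd (ge_of_tendsto' (FloorSemiring.tendsto_pow_div_factorial_atTop ‖z⁻¹‖) hle)
      (by norm_num)
  rw [spectrum.notMem_iff, ← neg_sub, IsUnit.neg_iff,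
    ContinuousLinearMap.isUnit_iff_bijective] at hspec
  exact hspec

lemma isQuasinilpotentOp_volterra : IsQuasinilpotentOp volterra :=
  isQuasinilpotentOp_of_norm_pow_apply_le fun n f => norm_volterra_pow_le f n

/-- The function `x ↦ 1 - x` on `[0,1]`. -/
noncomputable def reflection : C(Set.Icc (0 : ℝ) 1, ℂ) :=
  ⟨fun x => ((1 - x : ℝ) : ℂ), by fun_prop⟩

lemma volterra_reflection_pow (n : ℕ) :
    volterra (reflection ^ n) = ((n : ℂ) + 1)⁻¹ • (1 - reflection ^ (n + 1)) := by
  ext x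
  have hcongr : ∀ t ∈ Set.uIcc (0 : ℝ) x,
      (reflection ^ n) (Set.projIcc 0 1 zero_le_one t) = (((1 - t) ^ n : ℝ) : ℂ) := by
    intro t ht
    rw [Set.uIcc_of_le x.2.1] at ht
    rw [Set.projIcc_of_mem zero_le_one ⟨ht.1, ht.2.trans x.2.2⟩]
    simp [reflection]
  rw [volterra_apply, intervalIntegral.integral_congr hcongr, intervalIntegral.integral_ofReal,
    intervalIntegral.integral_comp_sub_left (fun t => t ^ n), integral_pow]
  simp [reflection, div_eq_inv_mul]

lemma norm_reflection_pow_le (n : ℕ) : ‖reflection ^ n‖ ≤ 1 := by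
  rw [ContinuousMap.norm_le _ zero_le_one]
  intro x
  have hx := x.2
  rw [ContinuousMap.pow_apply, norm_pow]
  refine pow_le_one₀ (norm_nonneg _) ?_
  rw [reflection, ContinuousMap.coe_mk, Complex.norm_real, Real.norm_of_nonneg (by linarith [hx.2])]
  linarith [hx.1]

lemma dense_range_aeval_reflection :
    Dense (Set.range fun p : ℂ[X] => aeval reflection p) := by
  have hstar : star reflection = reflection := by
    ext x
    simp [reflection]
  let A : StarSubalgebra ℂ C(Set.Icc (0 : ℝ) 1, ℂ) :=
    { Algebra.adjoin ℂ {reflection} with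
      star_mem' := fun {a} ha => by
        have h : star a ∈ star (Algebra.adjoin ℂ {reflection}) :=
          (Subalgebra.star_mem_star_iff _ a).2 ha
        rwa [Subalgebra.star_adjoin_comm, Set.star_singleton, hstar] at h }
  have hA : A.SeparatesPoints := by
    intro x y hxy
    refine ⟨_, ⟨reflection, Algebra.self_mem_adjoin_singleton ℂ _, rfl⟩, fun h => hxy ?_⟩
    simpa [reflection, Subtype.ext_iff] using h
  have hrange : (A : Set C(Set.Icc (0 : ℝ) 1, ℂ)) =
      Set.range fun p : ℂ[X] => aeval reflection p :=
    congrArg (fun B : Subalgebra ℂ C(Set.Icc (0 : ℝ) 1, ℂ) => (B : Set C(Set.Icc (0 : ℝ) 1, ℂ)))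
      (Algebra.adjoin_singleton_eq_range_aeval ℂ reflection)
  have htop := ContinuousMap.starSubalgebra_topologicalClosure_eq_top_of_separatesPoints A hA
  rw [← hrange, dense_iff_closure_eq, ← StarSubalgebra.topologicalClosure_coe, htop,
    StarSubalgebra.coe_top]

lemma closure_range_volterra_eq :
    closure (LinearMap.range (volterra ^ 1) : Set C(Set.Icc (0 : ℝ) 1, ℂ)) =
      closure (LinearMap.range (volterra ^ (1 + 1)) : Set C(Set.Icc (0 : ℝ) 1, ℂ)) := by
  let W : Submodule ℂ C(Set.Icc (0 : ℝ) 1, ℂ) :=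
    (LinearMap.range (volterra ^ (1 + 1))).topologicalClosure.comap volterra
  have hWclosed : IsClosed (W : Set C(Set.Icc (0 : ℝ) 1, ℂ)) :=
    (Submodule.isClosed_topologicalClosure _).preimage continuous_volterra
  have hsub : ∀ n : ℕ, volterra (1 - reflection ^ (n + 1)) ∈
      LinearMap.range (volterra ^ (1 + 1)) := by
    intro n
    refine ⟨((n : ℂ) + 1) • reflection ^ n, ?_⟩
    rw [pow_succ, pow_one, Module.End.mul_apply, map_smul, volterra_reflection_pow,
      smul_inv_smul₀ (Nat.cast_add_one_ne_zero n)]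
  have hone : (1 : C(Set.Icc (0 : ℝ) 1, ℂ)) ∈ W := by
    refine mem_closure_of_tendsto (f := fun n : ℕ => volterra (1 - reflection ^ (n + 1)))
      (b := Filter.atTop) ?_ (Filter.Eventually.of_forall hsub)
    refine tendsto_iff_norm_sub_tendsto_zero.2 (squeeze_zero (fun _ => norm_nonneg _)
      (g := fun n : ℕ => 2 * (1 / ((n : ℝ) + 1))) (fun n => ?_) ?_)
    · rw [← map_sub, sub_sub_cancel_left, map_neg, norm_neg, volterra_reflection_pow, norm_smul]
      have h1 : ‖((((n + 1 : ℕ) : ℂ) + 1)⁻¹)‖ ≤ 1 / ((n : ℝ) + 1) := by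
        rw [norm_inv, ← Nat.cast_succ, Complex.norm_natCast, ← one_div]
        push_cast
        gcongr
        linarith
      have h2 : ‖1 - reflection ^ (n + 1 + 1)‖ ≤ 1 + 1 :=
        norm_sub_le_of_le (by simp) (norm_reflection_pow_le _)
      calc _ ≤ 1 / ((n : ℝ) + 1) * (1 + 1) := by gcongr
        _ = 2 * (1 / ((n : ℝ) + 1)) := by ring
    · simpa using tendsto_one_div_add_atTop_nhds_zero_nat.const_mul (2 : ℝ)
  have hpow : ∀ n : ℕ, reflection ^ n ∈ W := by
    rintro (_ | n)
    · simpa using hone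
    · rw [← sub_sub_cancel 1 (reflection ^ (n + 1))]
      exact W.sub_mem hone (Submodule.le_topologicalClosure _ (hsub n))
  have hW : ∀ f, f ∈ W := by
    intro f
    refine closure_minimal ?_ hWclosed (dense_range_aeval_reflection f)
    rintro _ ⟨p, rfl⟩
    simp only [SetLike.mem_coe, aeval_eq_sum_range]
    exact W.sum_mem fun n _ => W.smul_mem _ (hpow n)
  refine (closure_minimal ?_ isClosed_closure).antisymm (closure_mono ?_)
  · rintro _ ⟨f, rfl⟩
    rw [pow_one]
    exact hW f
  · rintro _ ⟨f, rfl⟩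
    exact ⟨volterra f, by rw [pow_succ _ 1, Module.End.mul_apply]⟩

lemma mk_continuousMap_le_continuum : Cardinal.mk C(Set.Icc (0 : ℝ) 1, ℂ) ≤ Cardinal.continuum := by
  have hinj : Function.Injective fun (f : C(Set.Icc (0 : ℝ) 1, ℂ)) (n : ℕ) =>
      f (TopologicalSpace.denseSeq _ n) := by
    intro f g h
    refine DFunLike.coe_injective (Continuous.ext_on
      (TopologicalSpace.denseRange_denseSeq _) f.continuous g.continuous ?_)
    rintro _ ⟨n, rfl⟩
    exact congrFun h n
  refine (mk_le_of_injective hinj).trans ?_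
  simp

end Volterra
/-- Theorem 1.2: a bounded linear operator `T` on a complex Banach space of algebraic
dimension continuum is algebraically similar to the Volterra operator on `C[0,1]` if and
only if `T` is injective, quasinilpotent and has closed finite descent. -/
theorem similar_to_volterra_iff
    {X : Type*} [NormedAddCommGroup X] [NormedSpace ℂ X] [CompleteSpace X]
    (hdim : Module.rank ℂ X = Cardinal.continuum)
    (T : X →ₗ[ℂ] X) (hT : Continuous T) :
    (∃ G : X ≃ₗ[ℂ] C(Set.Icc (0:ℝ) 1, ℂ), ∀ x : X, G (T x) = volterra (G x)) ↔
    (Function.Injective T ∧ IsQuasinilpotentOp T ∧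
      ∃ m : ℕ, closure ((LinearMap.range (T ^ m) : Submodule ℂ X) : Set X) =
        closure ((LinearMap.range (T ^ (m + 1)) : Submodule ℂ X) : Set X)) := by
  have : Nontrivial X := by
    rw [← rank_pos_iff_nontrivial (R := ℂ), hdim]
    exact Cardinal.continuum_pos
  constructor
  · rintro ⟨G, hG⟩
    refine ⟨fun x y hxy => G.injective (volterra_injective ?_),
      isQuasinilpotentOp_volterra.of_equiv G hG, exists_closure_range_eq_of_hasBorelProperty
        ((hasBorelProperty_of_closure_range_eq continuous_volterra volterra_injective
          closure_range_volterra_eq).of_equiv G hG)⟩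
    rw [← hG, ← hG, hxy]
  · rintro ⟨hinj, hq, m, hm⟩
    obtain ⟨G, hG⟩ := exists_equiv_model_of_closure_range_eq
      (mk_le_continuum_of_rank_le hdim.le) hT hinj hq hm
    obtain ⟨H, hH⟩ := exists_equiv_model_of_closure_range_eq mk_continuousMap_le_continuum
      continuous_volterra volterra_injective isQuasinilpotentOp_volterra closure_range_volterra_eq
    exact ⟨G.trans H.symm, fun x => H.injective (by simp [hG, hH])⟩
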